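/- For every real p ≥ 1, the energy of the soliton satisfies E(Q_p) := ∫_ℝ [ (1/2)·Q_p'(x)² − (1/(p+2))·Q_p(x)^{p+2} ] dx = ((p−4)/(2(p+4))) · ∫_ℝ Q_p(x)² dx. In particular E(Q_p) = 0 if and only if p = 4. -/

import Mathlib

open Real MeasureTheory

/-- The soliton profile `Q_p(x) = ((p+2)/2)^(1/p) * (cosh (p*x/2))^(-2/p)`. -/
noncomputable def solitonQ (p : ℝ) (x : ℝ) : ℝ :=
  ((p + 2) / 2) ^ (1 / p) * (Real.cosh (p * x / 2)) ^ (-(2 / p))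

/-!
The profile solves the soliton equation `Q'' = Q - Q ^ (p + 1)`, with first integral
`Q' ^ 2 = Q ^ 2 - 2 / (p + 2) * Q ^ (p + 2)`. Multiplying the equation by `Q` and integrating by
parts gives `∫ Q' ^ 2 = ∫ Q ^ (p + 2) - ∫ Q ^ 2`; integrating the first integral gives a second
linear relation between the same three integrals. Together they express `∫ Q' ^ 2` and
`∫ Q ^ (p + 2)`, hence the energy, as multiples of `∫ Q ^ 2`, which is positive.
-/

open Filter Asymptotics

theorem one_sub_tanh_sq (x : ℝ) : 1 - tanh x ^ 2 = (cosh x ^ 2)⁻¹ := by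
  have := (cosh_pos x).ne'
  rw [tanh_eq_sinh_div_cosh, div_pow, sinh_sq]
  field_simp
  ring

theorem hasDerivAt_tanh (x : ℝ) : HasDerivAt tanh (1 - tanh x ^ 2) x := by
  have hquot := (hasDerivAt_sinh x).div (hasDerivAt_cosh x) (cosh_pos x).ne'
  rw [← sq, ← sq, cosh_sq_sub_sinh_sq, one_div, ← one_sub_tanh_sq] at hquot
  exact hquot.congr_of_eventuallyEq (.of_forall tanh_eq_sinh_div_cosh)

theorem cosh_rpow_neg_isBigO_exp_neg {r : ℝ} (hr : 0 ≤ r) :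
    (fun x => cosh x ^ (-r)) =O[atTop] fun x => exp (-r * x) := by
  refine .of_bound ((2⁻¹ : ℝ) ^ (-r)) (.of_forall fun x => ?_)
  have hcosh : 2⁻¹ * exp x ≤ cosh x := by
    rw [cosh_eq]
    linarith [exp_pos (-x)]
  rw [norm_of_nonneg (by positivity), norm_of_nonneg (exp_pos _).le, mul_comm (-r), exp_mul,
    ← mul_rpow (by positivity) (exp_pos x).le]
  exact rpow_le_rpow_of_nonpos (by positivity) hcosh (neg_nonpos.2 hr)

theorem integrable_cosh_rpow_neg {r : ℝ} (hr : 0 < r) :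
    Integrable fun x => cosh x ^ (-r) := by
  have hcont : Continuous fun x => cosh x ^ (-r) :=
    continuous_cosh.rpow_const fun x => .inl (cosh_pos x).ne'
  refine hcont.locallyIntegrable.integrable_of_isBigO_atTop_of_norm_isNegInvariant
    (.of_forall fun x => ?_) (cosh_rpow_neg_isBigO_exp_neg hr.le)
    ⟨Set.Ioi 0, Ioi_mem_atTop 0, exp_neg_integrableOn_Ioi 0 hr⟩
  simp only [Function.comp_apply, cosh_neg]

/-- The energy `E(u) = ∫ (u' ^ 2 / 2 - u ^ (p + 2) / (p + 2))` of the generalized Korteweg–de Vries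
equation with nonlinearity `u ^ (p + 1)`. -/
noncomputable def gKdVEnergy (p : ℝ) (u : ℝ → ℝ) : ℝ :=
  ∫ x, ((1 / 2) * deriv u x ^ 2 - (1 / (p + 2)) * u x ^ (p + 2))

section Soliton

variable {p : ℝ}

theorem solitonQ_pos (hp : 0 < p) (x : ℝ) : 0 < solitonQ p x := by
  have := cosh_pos (p * x / 2)
  unfold solitonQ
  positivity

theorem solitonQ_rpow (hp : 0 < p) (q x : ℝ) :
    solitonQ p x ^ q = ((p + 2) / 2) ^ (q / p) * cosh (p * x / 2) ^ (-(2 * q / p)) := by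
  have hcosh := (cosh_pos (p * x / 2)).le
  unfold solitonQ
  rw [mul_rpow (by positivity) (by positivity), ← rpow_mul (by positivity), ← rpow_mul hcosh]
  congr 2 <;> ring

theorem solitonQ_rpow_self (hp : 0 < p) (x : ℝ) :
    solitonQ p x ^ p = (p + 2) / 2 * (1 - tanh (p * x / 2) ^ 2) := by
  rw [solitonQ_rpow hp, div_self hp.ne', mul_div_cancel_right₀ _ hp.ne', rpow_one,
    rpow_neg (cosh_pos _).le, rpow_two, one_sub_tanh_sq]

theorem hasDerivAt_mul_div_two (p x : ℝ) : HasDerivAt (fun x => p * x / 2) (p / 2) x := by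
  simpa only [id_eq, mul_one] using ((hasDerivAt_id x).const_mul p).div_const 2

theorem hasDerivAt_solitonQ (hp : p ≠ 0) (x : ℝ) :
    HasDerivAt (solitonQ p) (-tanh (p * x / 2) * solitonQ p x) x := by
  have hcosh := (cosh_pos (p * x / 2)).ne'
  have hpow := (hasDerivAt_mul_div_two p x).cosh.rpow_const (p := -(2 / p)) (.inl hcosh)
  refine (hpow.const_mul (((p + 2) / 2) ^ (1 / p))).congr_deriv ?_
  rw [rpow_sub_one hcosh, tanh_eq_sinh_div_cosh, solitonQ]
  field_simp

theorem deriv_solitonQ (hp : p ≠ 0) :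
    deriv (solitonQ p) = fun x => -tanh (p * x / 2) * solitonQ p x :=
  funext fun x => (hasDerivAt_solitonQ hp x).deriv

theorem continuous_solitonQ (hp : p ≠ 0) : Continuous (solitonQ p) :=
  continuous_iff_continuousAt.2 fun x => (hasDerivAt_solitonQ hp x).continuousAt

theorem deriv_solitonQ_sq (hp : 0 < p) (x : ℝ) :
    deriv (solitonQ p) x ^ 2 = solitonQ p x ^ 2 - 2 / (p + 2) * solitonQ p x ^ (p + 2) := by
  rw [deriv_solitonQ hp.ne', rpow_add (solitonQ_pos hp x), solitonQ_rpow_self hp, rpow_two]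
  field_simp
  ring

theorem hasDerivAt_deriv_solitonQ (hp : 0 < p) (x : ℝ) :
    HasDerivAt (deriv (solitonQ p)) (solitonQ p x - solitonQ p x ^ (p + 1)) x := by
  have htanh := (hasDerivAt_tanh (p * x / 2)).comp x (hasDerivAt_mul_div_two p x)
  rw [deriv_solitonQ hp.ne']
  refine (htanh.neg.mul (hasDerivAt_solitonQ hp.ne' x)).congr_deriv ?_
  rw [rpow_add (solitonQ_pos hp x), solitonQ_rpow_self hp, rpow_one]
  simp only [Pi.neg_apply, Function.comp_apply]
  ring

theorem integrable_solitonQ_rpow (hp : 0 < p) {q : ℝ} (hq : 0 < q) :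
    Integrable fun x => solitonQ p x ^ q := by
  have hcosh := (integrable_cosh_rpow_neg (r := 2 * q / p) (by positivity)).comp_mul_left'
    (div_pos hp two_pos).ne'
  simpa only [solitonQ_rpow hp, div_mul_eq_mul_div] using
    hcosh.const_mul (((p + 2) / 2) ^ (q / p))

theorem integrable_solitonQ_sq (hp : 0 < p) : Integrable fun x => solitonQ p x ^ 2 := by
  simpa only [rpow_two] using integrable_solitonQ_rpow hp two_pos

theorem integrable_deriv_solitonQ_sq (hp : 0 < p) :
    Integrable fun x => deriv (solitonQ p) x ^ 2 := by
  simp only [deriv_solitonQ_sq hp]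
  exact (integrable_solitonQ_sq hp).sub ((integrable_solitonQ_rpow hp (by positivity)).const_mul _)

theorem integrable_solitonQ_mul_deriv (hp : 0 < p) :
    Integrable fun x => solitonQ p x * deriv (solitonQ p) x := by
  have hQ : MemLp (solitonQ p) 2 :=
    (memLp_two_iff_integrable_sq (continuous_solitonQ hp.ne').aestronglyMeasurable).2
      (integrable_solitonQ_sq hp)
  have hQ' : MemLp (deriv (solitonQ p)) 2 :=
    (memLp_two_iff_integrable_sq (aestronglyMeasurable_deriv _ _)).2
      (integrable_deriv_solitonQ_sq hp)
  exact hQ.integrable_mul hQ'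

theorem integral_solitonQ_sq_pos (hp : 0 < p) : 0 < ∫ x, solitonQ p x ^ 2 :=
  integral_pos_of_integrable_nonneg_nonzero ((continuous_solitonQ hp.ne').pow 2)
    (integrable_solitonQ_sq hp) (fun _ => sq_nonneg _) (pow_pos (solitonQ_pos hp 0) 2).ne'

theorem integral_deriv_solitonQ_sq (hp : 0 < p) :
    ∫ x, deriv (solitonQ p) x ^ 2 =
      (∫ x, solitonQ p x ^ 2) - 2 / (p + 2) * ∫ x, solitonQ p x ^ (p + 2) := by
  simp only [deriv_solitonQ_sq hp]
  rw [integral_sub (integrable_solitonQ_sq hp)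
    ((integrable_solitonQ_rpow hp (by positivity)).const_mul _), integral_const_mul]

theorem integral_deriv_solitonQ_sq_eq_sub (hp : 0 < p) :
    ∫ x, deriv (solitonQ p) x ^ 2 =
      (∫ x, solitonQ p x ^ (p + 2)) - ∫ x, solitonQ p x ^ 2 := by
  have hsq := integrable_solitonQ_sq hp
  have hrpow := integrable_solitonQ_rpow hp (q := p + 2) (by positivity)
  have hQQ'' (x : ℝ) : solitonQ p x * (solitonQ p x - solitonQ p x ^ (p + 1)) =
      solitonQ p x ^ 2 - solitonQ p x ^ (p + 2) := by
    rw [show p + 2 = 1 + (p + 1) by ring, rpow_add (solitonQ_pos hp x) 1, rpow_one]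
    ring
  have hparts := integral_mul_deriv_eq_deriv_mul_of_integrable
    (fun x _ => (hasDerivAt_solitonQ hp.ne' x).differentiableAt.hasDerivAt)
    (fun x _ => hasDerivAt_deriv_solitonQ hp x)
    ((hsq.sub hrpow).congr (.of_forall fun x => (hQQ'' x).symm))
    ((integrable_deriv_solitonQ_sq hp).congr (.of_forall fun x => sq _))
    (integrable_solitonQ_mul_deriv hp)
  simp only [hQQ'', ← sq, integral_sub hsq hrpow] at hparts
  linarith

theorem gKdVEnergy_solitonQ (hp : 0 < p) :
    gKdVEnergy p (solitonQ p) = (p - 4) / (2 * (p + 4)) * ∫ x, solitonQ p x ^ 2 := by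
  have hfirst := integral_deriv_solitonQ_sq hp
  have hvirial := integral_deriv_solitonQ_sq_eq_sub hp
  have hrpow : ∫ x, solitonQ p x ^ (p + 2) =
      2 * (p + 2) / (p + 4) * ∫ x, solitonQ p x ^ 2 := by
    rw [hfirst] at hvirial
    field_simp at hvirial ⊢
    linarith
  rw [gKdVEnergy, integral_sub ((integrable_deriv_solitonQ_sq hp).const_mul _)
    ((integrable_solitonQ_rpow hp (by positivity)).const_mul _), integral_const_mul,
    integral_const_mul, hvirial, hrpow]
  field_simp
  ring

theorem gKdVEnergy_solitonQ_eq_zero_iff (hp : 0 < p) :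
    gKdVEnergy p (solitonQ p) = 0 ↔ p = 4 := by
  have hden : 2 * (p + 4) ≠ 0 := by positivity
  rw [gKdVEnergy_solitonQ hp, mul_eq_zero, or_iff_left (integral_solitonQ_sq_pos hp).ne',
    div_eq_zero_iff, or_iff_left hden, sub_eq_zero]

end Soliton

theorem soliton_energy_general (p : ℝ) (hp : 0 < p) :
    (∫ x : ℝ, ((1 / 2) * (deriv (solitonQ p) x) ^ 2
        - (1 / (p + 2)) * (solitonQ p x) ^ (p + 2)))
      = ((p - 4) / (2 * (p + 4))) * ∫ x : ℝ, (solitonQ p x) ^ 2 ∧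
    ((∫ x : ℝ, ((1 / 2) * (deriv (solitonQ p) x) ^ 2
        - (1 / (p + 2)) * (solitonQ p x) ^ (p + 2))) = 0 ↔ p = 4) :=
  ⟨gKdVEnergy_solitonQ hp, gKdVEnergy_solitonQ_eq_zero_iff hp⟩

theorem soliton_energy (p : ℝ) (hp : 1 ≤ p) :
    (∫ x : ℝ, ((1 / 2) * (deriv (solitonQ p) x) ^ 2
        - (1 / (p + 2)) * (solitonQ p x) ^ (p + 2)))
      = ((p - 4) / (2 * (p + 4))) * ∫ x : ℝ, (solitonQ p x) ^ 2 ∧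
    ((∫ x : ℝ, ((1 / 2) * (deriv (solitonQ p) x) ^ 2
        - (1 / (p + 2)) * (solitonQ p x) ^ (p + 2))) = 0 ↔ p = 4) :=
  soliton_energy_general p (one_pos.trans_le hp)
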